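/- Let λ be a left-infinite word and ρ a right-infinite word over a finite alphabet A. The set OG_{λ,ρ} = {og_{λ,ρ}(n) : n ∈ ℕ} is finite if and only if there exist finite words u, w₁, w₂ over A (with u nonempty) such that λ = ∞u·w₁ = ⋯uuuw₁ and ρ = w₂·u∞ = w₂uuu⋯. -/

import Mathlib

/-- The suffix of length `n` of the left-infinite word `⋯ (lam 2)(lam 1)(lam 0)`. -/
def lSuffix {A : Type*} (lam : ℕ → A) (n : ℕ) : List A := (List.range n).reverse.map lam

/-- The prefix of length `n` of the right-infinite word `(rho 0)(rho 1)(rho 2) ⋯`. -/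
def rPrefix {A : Type*} (rho : ℕ → A) (n : ℕ) : List A := (List.range n).map rho

/-- The left overlap gap between two finite words. -/
noncomputable def logGap {A : Type*} (u v : List A) : ℕ :=
  sInf {n | ∃ x x' : List A, x.length = n ∧ x'.length = n ∧ u ++ x = x' ++ v}

/-- The right overlap gap between two finite words. -/
noncomputable def rogGap {A : Type*} (u v : List A) : ℕ :=
  sInf {n | ∃ x x' : List A, x.length = n ∧ x'.length = n ∧ x ++ u = v ++ x'}

/-- The overlap gap between two finite words. -/
noncomputable def ogGap {A : Type*} (u v : List A) : ℕ := min (logGap u v) (rogGap u v)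

/-- `lam` is the left-infinite word `∞u·w = ⋯uuuw`. -/
def IsLeftUP {A : Type*} (lam : ℕ → A) (u w : List A) : Prop :=
  ∀ k : ℕ, lSuffix lam (w.length + k * u.length) = (List.replicate k u).flatten ++ w

/-- `rho` is the right-infinite word `w·u∞ = wuuu⋯`. -/
def IsRightUP {A : Type*} (rho : ℕ → A) (w u : List A) : Prop :=
  ∀ k : ℕ, rPrefix rho (w.length + k * u.length) = w ++ (List.replicate k u).flatten

/-!
Place `ρ` over `λ` so that `ρ` starts `n` letters before `λ` ends. At length `m`, a left gap `k` is
an agreement on the overlap of length `n = m - k`, and a right gap `k` is an agreement on the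
overlap of length `n = m + k` away from its `k` outermost letters on each side. Hence bounded gaps
mean that, up to boundedly many letters at both ends, `λ` and `ρ` agree on overlaps whose lengths
are syndetic. By pigeonhole some `d > 0` is infinitely often the difference of two such lengths, and
comparing both overlaps through the other word shows that `ρ` and `λ` are eventually `d`-periodic;
any long enough overlap then identifies the two periods. Conversely, if eventually periodic words
agree on an overlap long enough to contain a full period, they still agree when it grows by a
period.
-/

open Filter Function

section Words

variable {A : Type*} (f g : ℕ → A) (m n : ℕ)

@[simp]
lemma length_rPrefix : (rPrefix f n).length = n := by simp [rPrefix]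

@[simp]
lemma length_lSuffix : (lSuffix f n).length = n := by simp [lSuffix]

lemma lSuffix_eq_reverse_rPrefix : lSuffix f n = (rPrefix f n).reverse :=
  List.map_reverse

lemma rPrefix_add : rPrefix f (m + n) = rPrefix f m ++ rPrefix (fun i ↦ f (m + i)) n := by
  simp [rPrefix, List.range_add, comp_def]

variable {f g n}

@[simp]
lemma getElem_rPrefix {i : ℕ} (hi : i < (rPrefix f n).length) : (rPrefix f n)[i] = f i := by
  simp [rPrefix]

@[simp]
lemma getElem_lSuffix {i : ℕ} (hi : i < (lSuffix f n).length) :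
    (lSuffix f n)[i] = f (n - 1 - i) := by
  simp [lSuffix]

lemma rPrefix_inj : rPrefix f n = rPrefix g n ↔ ∀ i < n, f i = g i := by
  simp [rPrefix, List.map_inj_left]

lemma lSuffix_eq_rPrefix_iff :
    lSuffix f n = rPrefix g n ↔ ∀ a b, a + b + 1 = n → f b = g a := by
  constructor
  · rintro h a b rfl
    have hget : (lSuffix f (a + b + 1))[a]? = (rPrefix g (a + b + 1))[a]? := by rw [h]
    simpa [lSuffix, rPrefix, show a < a + b + 1 by omega] using hget
  · intro h
    refine List.ext_getElem (by simp) fun i hi _ ↦ ?_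
    rw [length_lSuffix] at hi
    simpa using h i (n - 1 - i) (by omega)

end Words

section OverlapGap

variable {A : Type*} {u v : List A} {k : ℕ}

lemma rogGap_eq_logGap_swap (u v : List A) : rogGap u v = logGap v u := by
  unfold rogGap logGap
  congr! 3 with n
  exact ⟨fun ⟨x, x', hx, hx', h⟩ ↦ ⟨x', x, hx', hx, h.symm⟩,
    fun ⟨x, x', hx, hx', h⟩ ↦ ⟨x', x, hx', hx, h.symm⟩⟩

lemma drop_logGap_prefix (h : u.length = v.length) : u.drop (logGap u v) <+: v := by
  obtain ⟨x, x', -, hx', hov⟩ : logGap u v ∈ {n | ∃ x x' : List A,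
      x.length = n ∧ x'.length = n ∧ u ++ x = x' ++ v} :=
    Nat.sInf_mem ⟨u.length, v, u, h.symm, rfl, rfl⟩
  have hdrop := congrArg (List.drop (logGap u v)) hov
  rw [List.drop_append, List.drop_left' hx'] at hdrop
  exact ⟨_, hdrop⟩

lemma logGap_le_of_drop_prefix (h : u.length = v.length) (hk : u.drop k <+: v) :
    logGap u v ≤ k := by
  obtain ⟨x, rfl⟩ := hk
  have hx : x.length = (u.take k).length := by
    simp only [List.length_append, List.length_drop] at h
    simp only [List.length_take]
    omega
  calc logGap u (u.drop k ++ x) ≤ (u.take k).length :=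
        Nat.sInf_le ⟨x, u.take k, hx, rfl, by rw [← List.append_assoc, List.take_append_drop]⟩
    _ ≤ k := List.length_take_le k u

end OverlapGap

/-- Agreement of a left-infinite and a right-infinite word on an overlap: when `rho` starts `n`
letters before `lam` ends, the letter `b` of `lam` (counted from its right end) lies over the letter
`a` of `rho` precisely if `a + b + 1 = n`. The last `c` letters of `lam` and the first `c'` letters
of `rho` are exempt from the agreement. -/
def AgreeOnOverlap {A : Type*} (lam rho : ℕ → A) (n c c' : ℕ) : Prop :=
  ∀ a b, c ≤ b → c' ≤ a → a + b + 1 = n → lam b = rho a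

/-- The lengths of the overlaps on which `lam` and `rho` agree, up to a bounded number of letters at
both ends, form a syndetic set. -/
def AgreeSyndetically {A : Type*} (lam rho : ℕ → A) : Prop :=
  ∃ K, ∀ m, ∃ n, m ≤ n ∧ n ≤ m + K ∧ AgreeOnOverlap lam rho n K K

/-- The words `lam` and `rho` are eventually periodic with the same repeated block, of length `d`:
both are `d`-periodic beyond cutoffs `c` and `c'`, and the blocks of length `d` adjacent to these
cutoffs coincide. -/
def SharePeriodicBlock {A : Type*} (lam rho : ℕ → A) : Prop :=
  ∃ c c' d, 0 < d ∧ Periodic (fun i ↦ lam (c + i)) d ∧ Periodic (fun i ↦ rho (c' + i)) d ∧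
    AgreeOnOverlap lam rho (c + d + c') c c'

section AgreeOnOverlap

variable {A : Type*} {lam rho : ℕ → A} {n k c c' e e' d : ℕ}

lemma AgreeOnOverlap.symm (h : AgreeOnOverlap lam rho n c c') : AgreeOnOverlap rho lam n c' c :=
  fun a b hb ha hab ↦ (h b a ha hb (by omega)).symm

lemma AgreeOnOverlap.mono (hc : c ≤ e) (hc' : c' ≤ e') (h : AgreeOnOverlap lam rho n c c') :
    AgreeOnOverlap lam rho n e e' :=
  fun a b hb ha ↦ h a b (hc.trans hb) (hc'.trans ha)

lemma lSuffix_eq_rPrefix_iff_agreeOnOverlap :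
    lSuffix (fun i ↦ lam (c + i)) n = rPrefix (fun i ↦ rho (c' + i)) n ↔
      AgreeOnOverlap lam rho (c + n + c') c c' := by
  rw [lSuffix_eq_rPrefix_iff]
  constructor
  · intro h a b hb ha hab
    obtain ⟨i, rfl⟩ := Nat.exists_eq_add_of_le ha
    obtain ⟨j, rfl⟩ := Nat.exists_eq_add_of_le hb
    exact h i j (by omega)
  · intro h i j hij
    exact h (c' + i) (c + j) (by omega) (by omega) (by omega)

lemma drop_lSuffix_prefix_rPrefix_iff :
    (lSuffix lam n).drop k <+: rPrefix rho n ↔ AgreeOnOverlap lam rho (n - k) 0 0 := by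
  simp only [List.prefix_iff_getElem, List.length_drop, length_lSuffix, length_rPrefix,
    List.getElem_drop, getElem_lSuffix, getElem_rPrefix]
  constructor
  · rintro ⟨-, h⟩ a b - - hab
    rw [← h a (by omega)]
    congr 1
    omega
  · exact fun h ↦ ⟨by omega, fun i hi ↦ h i _ (by omega) (by omega) (by omega)⟩

lemma drop_rPrefix_prefix_lSuffix_iff :
    (rPrefix rho n).drop k <+: lSuffix lam n ↔ AgreeOnOverlap lam rho (n + k) k k := by
  simp only [List.prefix_iff_getElem, List.length_drop, length_lSuffix, length_rPrefix,
    List.getElem_drop, getElem_lSuffix, getElem_rPrefix]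
  constructor
  · rintro ⟨-, h⟩ a b hb ha hab
    have hletter := h (a - k) (by omega)
    rw [show k + (a - k) = a by omega, show n - 1 - (a - k) = b by omega] at hletter
    exact hletter.symm
  · exact fun h ↦ ⟨by omega, fun i hi ↦ (h _ _ (by omega) (by omega) (by omega)).symm⟩

lemma ogGap_le_of_agreeOnOverlap (h : AgreeOnOverlap lam rho (n + k) k k) :
    ogGap (lSuffix lam n) (rPrefix rho n) ≤ k := by
  refine (min_le_right _ _).trans ?_
  rw [rogGap_eq_logGap_swap]
  exact logGap_le_of_drop_prefix (by simp) (drop_rPrefix_prefix_lSuffix_iff.2 h)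

lemma exists_agreeOnOverlap_of_ogGap_le (h : ogGap (lSuffix lam n) (rPrefix rho n) ≤ k) :
    ∃ m, n - k ≤ m ∧ m ≤ n + k ∧ AgreeOnOverlap lam rho m k k := by
  rcases min_le_iff.1 h with hlog | hrog
  · have hagree := drop_lSuffix_prefix_rPrefix_iff.1
      (drop_logGap_prefix (u := lSuffix lam n) (v := rPrefix rho n) (by simp))
    exact ⟨_, by omega, by omega, hagree.mono (Nat.zero_le k) (Nat.zero_le k)⟩
  · rw [rogGap_eq_logGap_swap] at hrog
    have hagree := drop_rPrefix_prefix_lSuffix_iff.1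
      (drop_logGap_prefix (u := rPrefix rho n) (v := lSuffix lam n) (by simp))
    exact ⟨_, by omega, by omega, hagree.mono hrog hrog⟩

lemma AgreeOnOverlap.add_period (hlam : Periodic (fun i ↦ lam (c + i)) d)
    (hrho : Periodic (fun i ↦ rho (c' + i)) d) (hn : c + d + c' ≤ n)
    (h : AgreeOnOverlap lam rho n c c') : AgreeOnOverlap lam rho (n + d) c c' := by
  intro a b hb ha hab
  have hlong : c' + d ≤ a ∨ c + d ≤ b := by omega
  rcases hlong with ha' | hb'
  · obtain ⟨i, rfl⟩ := Nat.exists_eq_add_of_le ha'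
    calc lam b = rho (c' + i) := h _ _ hb (by omega) (by omega)
      _ = rho (c' + (i + d)) := (hrho i).symm
      _ = rho (c' + d + i) := by rw [add_assoc, add_comm i]
  · obtain ⟨j, rfl⟩ := Nat.exists_eq_add_of_le hb'
    calc lam (c + d + j) = lam (c + (j + d)) := by rw [add_assoc, add_comm j]
      _ = lam (c + j) := hlam j
      _ = rho a := h _ _ (by omega) ha (by omega)

lemma periodic_of_frequently_agreeOnOverlap
    (h : ∃ᶠ n in atTop, AgreeOnOverlap lam rho n c c' ∧ AgreeOnOverlap lam rho (n + d) c c') :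
    Periodic (fun i ↦ rho (c' + i)) d := by
  intro i
  obtain ⟨n, hn, hagree, hagree'⟩ := frequently_atTop.1 h (c + c' + i + 1)
  calc rho (c' + (i + d)) = lam (n - (c' + i + 1)) :=
        (hagree' _ _ (by omega) (by omega) (by omega)).symm
    _ = rho (c' + i) := hagree _ _ (by omega) (by omega) (by omega)

end AgreeOnOverlap

lemma exists_frequently_and_add {P : ℕ → Prop} {K : ℕ}
    (hP : ∀ m, ∃ n, m ≤ n ∧ n ≤ m + K ∧ P n) :
    ∃ d, 0 < d ∧ ∃ᶠ n in atTop, P n ∧ P (n + d) := by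
  by_contra hcon
  have hev : ∀ᶠ n in atTop, ∀ d ∈ Finset.Icc 1 (K + 1), ¬ (P n ∧ P (n + d)) :=
    (Finset.eventually_all _).2 fun d hd ↦
      not_frequently.1 fun hfreq ↦ hcon ⟨d, (Finset.mem_Icc.1 hd).1, hfreq⟩
  obtain ⟨N, hN⟩ := eventually_atTop.1 hev
  obtain ⟨s, hNs, -, hs⟩ := hP N
  obtain ⟨t, hst, htK, ht⟩ := hP (s + 1)
  refine hN s hNs (t - s) (Finset.mem_Icc.2 (by omega)) ⟨hs, ?_⟩
  rwa [show s + (t - s) = t by omega]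

section PeriodicWords

variable {A : Type*} {f : ℕ → A} {u w : List A}

lemma rPrefix_mul_eq_flatten_replicate_iff :
    (∀ k, rPrefix f (k * u.length) = (List.replicate k u).flatten) ↔
      rPrefix f u.length = u ∧ Periodic f u.length := by
  have hsucc (k : ℕ) : rPrefix f ((k + 1) * u.length) =
      rPrefix f u.length ++ rPrefix (fun i ↦ f (u.length + i)) (k * u.length) := by
    rw [Nat.succ_mul, add_comm, rPrefix_add]
  constructor
  · intro h
    have hu : rPrefix f u.length = u := by simpa using h 1
    refine ⟨hu, fun i ↦ ?_⟩
    rcases Nat.eq_zero_or_pos u.length with hzero | hpos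
    · rw [hzero, add_zero]
    have hshift : rPrefix (fun i ↦ f (u.length + i)) ((i + 1) * u.length) =
        rPrefix f ((i + 1) * u.length) := by
      apply List.append_cancel_left (as := u)
      rw [h, ← List.flatten_cons, ← List.replicate_succ, ← h, hsucc, hu]
    have hi : i < (i + 1) * u.length :=
      i.lt_succ_self.trans_le (Nat.le_mul_of_pos_right _ hpos)
    simpa [add_comm] using rPrefix_inj.1 hshift i hi
  · rintro ⟨hu, hper⟩ k
    induction k with
    | zero => simp [rPrefix]
    | succ k ih =>
      have hshift : (fun i ↦ f (u.length + i)) = f := by simpa [add_comm] using hper.funext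
      rw [hsucc, hshift, hu, ih, List.replicate_succ, List.flatten_cons]

lemma isRightUP_iff :
    IsRightUP f w u ↔ rPrefix f w.length = w ∧
      rPrefix (fun i ↦ f (w.length + i)) u.length = u ∧
      Periodic (fun i ↦ f (w.length + i)) u.length := by
  have hsplit (k : ℕ) : rPrefix f (w.length + k * u.length) = w ++ (List.replicate k u).flatten ↔
      rPrefix f w.length = w ∧ rPrefix (fun i ↦ f (w.length + i)) (k * u.length) =
        (List.replicate k u).flatten := by
    rw [rPrefix_add]
    exact ⟨fun h ↦ List.append_inj h (by simp), fun ⟨h, h'⟩ ↦ by rw [h, h']⟩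
  simp only [IsRightUP, hsplit, forall_and, forall_const, rPrefix_mul_eq_flatten_replicate_iff]

lemma isLeftUP_iff_isRightUP_reverse : IsLeftUP f u w ↔ IsRightUP f w.reverse u.reverse := by
  refine forall_congr' fun k ↦ ?_
  rw [lSuffix_eq_reverse_rPrefix, List.reverse_eq_iff]
  simp [List.reverse_flatten]

lemma isLeftUP_iff :
    IsLeftUP f u w ↔ lSuffix f w.length = w ∧
      lSuffix (fun i ↦ f (w.length + i)) u.length = u ∧
      Periodic (fun i ↦ f (w.length + i)) u.length := by
  simp only [isLeftUP_iff_isRightUP_reverse, isRightUP_iff, List.length_reverse,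
    lSuffix_eq_reverse_rPrefix, List.reverse_eq_iff]

end PeriodicWords

section Equivalences

variable {A : Type*} {lam rho : ℕ → A}

lemma finite_range_ogGap_iff_agreeSyndetically :
    (Set.range fun n ↦ ogGap (lSuffix lam n) (rPrefix rho n)).Finite ↔
      AgreeSyndetically lam rho := by
  constructor
  · intro hfin
    obtain ⟨K, hK⟩ := hfin.bddAbove
    refine ⟨2 * K, fun m ↦ ?_⟩
    obtain ⟨n, hle, hge, hagree⟩ := exists_agreeOnOverlap_of_ogGap_le (hK ⟨m + K, rfl⟩)
    exact ⟨n, by omega, by omega, hagree.mono (by omega) (by omega)⟩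
  · rintro ⟨K, hK⟩
    refine (Set.finite_Iic (2 * K)).subset ?_
    rintro _ ⟨n, rfl⟩
    obtain ⟨m, hle, hge, hagree⟩ := hK (n + K)
    obtain ⟨k, rfl⟩ := Nat.exists_eq_add_of_le (show n ≤ m by omega)
    have hgap := ogGap_le_of_agreeOnOverlap (hagree.mono (by omega : K ≤ k) (by omega : K ≤ k))
    exact hgap.trans (by omega)

lemma AgreeSyndetically.sharePeriodicBlock (h : AgreeSyndetically lam rho) :
    SharePeriodicBlock lam rho := by
  obtain ⟨K, hK⟩ := h
  obtain ⟨d, hd, hfreq⟩ := exists_frequently_and_add hK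
  have hrho : Periodic (fun i ↦ rho (K + i)) d := periodic_of_frequently_agreeOnOverlap hfreq
  have hlam : Periodic (fun i ↦ lam (K + i)) d :=
    periodic_of_frequently_agreeOnOverlap (hfreq.mono fun _ hn ↦ ⟨hn.1.symm, hn.2.symm⟩)
  obtain ⟨n, hn, hagree, -⟩ := frequently_atTop.1 hfreq (K + d + K)
  obtain ⟨j, rfl⟩ := Nat.exists_eq_add_of_le hn
  refine ⟨K, K + j, d, hd, hlam, by simpa only [add_assoc] using hrho.const_add j, ?_⟩
  rw [← add_assoc]
  exact hagree.mono le_rfl (by omega)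

lemma SharePeriodicBlock.agreeSyndetically (h : SharePeriodicBlock lam rho) :
    AgreeSyndetically lam rho := by
  obtain ⟨c, c', d, hd, hlam, hrho, hagree⟩ := h
  have hmul (q : ℕ) : AgreeOnOverlap lam rho (c + d + c' + q * d) c c' := by
    induction q with
    | zero => simpa using hagree
    | succ q ih => simpa only [Nat.succ_mul, add_assoc] using ih.add_period hlam hrho (by omega)
  refine ⟨c + d + c', fun m ↦ ⟨c + d + c' + m / d * d, ?_, ?_, ?_⟩⟩
  · have := Nat.lt_div_mul_add hd (a := m)
    omega
  · have := Nat.div_mul_le_self m d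
    omega
  · exact (hmul _).mono (by omega) (by omega)

lemma exists_isLeftUP_isRightUP_iff_sharePeriodicBlock :
    (∃ u w₁ w₂ : List A, u ≠ [] ∧ IsLeftUP lam u w₁ ∧ IsRightUP rho w₂ u) ↔
      SharePeriodicBlock lam rho := by
  constructor
  · rintro ⟨u, w₁, w₂, hu, hleft, hright⟩
    obtain ⟨-, hlam, hlam_per⟩ := isLeftUP_iff.1 hleft
    obtain ⟨-, hrho, hrho_per⟩ := isRightUP_iff.1 hright
    exact ⟨w₁.length, w₂.length, u.length, List.length_pos_iff.2 hu, hlam_per, hrho_per,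
      lSuffix_eq_rPrefix_iff_agreeOnOverlap.1 (hlam.trans hrho.symm)⟩
  · rintro ⟨c, c', d, hd, hlam, hrho, hagree⟩
    have hblock := lSuffix_eq_rPrefix_iff_agreeOnOverlap.2 hagree
    refine ⟨rPrefix (fun i ↦ rho (c' + i)) d, lSuffix lam c, rPrefix rho c', ?_, ?_, ?_⟩
    · exact List.ne_nil_of_length_pos (by simpa using hd)
    · simpa [isLeftUP_iff, hblock] using hlam
    · simpa [isRightUP_iff] using hrho

end Equivalences

theorem og_finite_iff_general {A : Type*} (lam rho : ℕ → A) :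
    (Set.range fun n ↦ ogGap (lSuffix lam n) (rPrefix rho n)).Finite ↔
      ∃ u w₁ w₂ : List A, u ≠ [] ∧ IsLeftUP lam u w₁ ∧ IsRightUP rho w₂ u := by
  rw [finite_range_ogGap_iff_agreeSyndetically, exists_isLeftUP_isRightUP_iff_sharePeriodicBlock]
  exact ⟨AgreeSyndetically.sharePeriodicBlock, SharePeriodicBlock.agreeSyndetically⟩

/-- `OG_{λ,ρ}` is finite iff `λ = ∞u·w₁` and `ρ = w₂·u∞` for some words `u, w₁, w₂`
with `u` nonempty. -/
theorem og_finite_iff {A : Type*} [Fintype A] [Nonempty A] (lam rho : ℕ → A) :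
    (Set.range fun n => ogGap (lSuffix lam n) (rPrefix rho n)).Finite ↔
      ∃ u w₁ w₂ : List A, u ≠ [] ∧ IsLeftUP lam u w₁ ∧ IsRightUP rho w₂ u :=
  og_finite_iff_general lam rho
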